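/- Let n ≥ 1, α > 0, and let v ∈ EuclideanSpace ℝ (Fin n) satisfy ‖v‖₂ ≤ 1. Then the inner product ∑ᵢ v i * Real.tanh (α * v i) is at least Real.tanh α * ‖v‖₂², where ‖v‖₂ denotes the Euclidean norm. -/

import Mathlib

/-!
The function `tanh` has derivative `1 / cosh ^ 2`, which decreases on `[0, ∞)`, so `tanh` is concave
there. As `tanh 0 = 0`, concavity on `[0, α]` gives `t * tanh α ≤ tanh (α * t)` for `t ∈ [0, 1]`.
Multiplying by `t` yields `tanh α * t ^ 2 ≤ t * tanh (α * t)`, in which both sides are even in `t`,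
so it holds for all `|t| ≤ 1`. Each coordinate of `v` satisfies `|v i| ≤ ‖v‖ ≤ 1`; sum over `i`.
-/

theorem hasDerivAt_tanh_real (x : ℝ) : HasDerivAt Real.tanh (1 / Real.cosh x ^ 2) x := by
  have h := (Real.hasDerivAt_sinh x).div (Real.hasDerivAt_cosh x) (Real.cosh_pos x).ne'
  have e : Real.tanh = Real.sinh / Real.cosh := by
    funext y
    exact Real.tanh_eq_sinh_div_cosh y
  have hn : Real.cosh x * Real.cosh x - Real.sinh x * Real.sinh x = 1 := by
    linarith [Real.cosh_sq x, sq (Real.cosh x), sq (Real.sinh x)]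
  rw [hn] at h
  rw [e]
  exact h

theorem concaveOn_tanh_Ici : ConcaveOn ℝ (Set.Ici 0) Real.tanh := by
  have hd : Differentiable ℝ Real.tanh := fun x => (hasDerivAt_tanh_real x).differentiableAt
  refine AntitoneOn.concaveOn_of_deriv (convex_Ici 0) hd.continuous.continuousOn
    hd.differentiableOn ?_
  rw [interior_Ici]
  intro x hx y hy hxy
  rw [(hasDerivAt_tanh_real x).deriv, (hasDerivAt_tanh_real y).deriv]
  have hx0 : 0 < x := hx
  have hc : Real.cosh x ≤ Real.cosh y := by
    rw [Real.cosh_le_cosh, abs_of_pos hx0, abs_of_pos (hx0.trans_le hxy)]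
    exact hxy
  have := Real.cosh_pos x
  gcongr

theorem mul_tanh_le_tanh_mul {α t : ℝ} (hα : 0 ≤ α) (h0 : 0 ≤ t) (h1 : t ≤ 1) :
    t * Real.tanh α ≤ Real.tanh (α * t) := by
  have h := concaveOn_tanh_Ici.2 (Set.mem_Ici.2 hα) (Set.mem_Ici.2 le_rfl) h0
    (sub_nonneg.2 h1) (add_sub_cancel t 1)
  simpa [mul_comm] using h

theorem tanh_mul_sq_le {α t : ℝ} (hα : 0 ≤ α) (ht : |t| ≤ 1) :
    Real.tanh α * t ^ 2 ≤ t * Real.tanh (α * t) := by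
  have h := mul_le_mul_of_nonneg_left (mul_tanh_le_tanh_mul hα (abs_nonneg t) ht) (abs_nonneg t)
  rcases abs_cases t with ⟨e, _⟩ | ⟨e, _⟩ <;> rw [e] at h
  · linarith
  · rw [mul_neg, Real.tanh_neg] at h
    linarith

/-- For a vector `v` with Euclidean norm at most 1 and `α > 0`,
`∑ i, v i * tanh (α * v i) ≥ tanh α * ‖v‖²`. -/
theorem inner_tanh_ge_tanh_mul_sq_norm (n : ℕ) (hn : 1 ≤ n) (α : ℝ) (hα : 0 < α)
    (v : EuclideanSpace ℝ (Fin n)) (hv : ‖v‖ ≤ 1) :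
    Real.tanh α * ‖v‖ ^ 2 ≤ ∑ i, v i * Real.tanh (α * v i) := by
  rw [EuclideanSpace.real_norm_sq_eq, Finset.mul_sum]
  refine Finset.sum_le_sum fun i _ => tanh_mul_sq_le hα.le ?_
  exact (PiLp.norm_apply_le v i).trans hv
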